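/- Suppose H_A = C^d, Alice performs the partial Bell state measurement with two outcomes M_0 = Φ+^{VA} and M_1 = 1_{VA} − Φ+^{VA}, and the input set {ω_x} is tomographically complete. Then the random teleportation robustness of the resulting assemblage equals ε_r(ρ^{AB})/d², where ε_r is the random entanglement robustness of the shared state. -/

import Mathlib

open Matrix ComplexOrder
open scoped Kronecker

namespace Tele

noncomputable def ptrace₁ {V B : Type*} [Fintype V]
    (M : Matrix (V × B) (V × B) ℂ) : Matrix B B ℂ :=
  Matrix.of fun b b' => ∑ v, M (v, b) (v, b')

noncomputable def ptrace₂ {V B : Type*} [Fintype B]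
    (M : Matrix (V × B) (V × B) ℂ) : Matrix V V ℂ :=
  Matrix.of fun v v' => ∑ b, M (v, b) (v', b)

noncomputable def ptraceMid {V A B : Type*} [Fintype A]
    (M : Matrix (V × A × B) (V × A × B) ℂ) : Matrix (V × B) (V × B) ℂ :=
  Matrix.of fun p q => ∑ a, M (p.1, a, p.2) (q.1, a, q.2)

noncomputable def ptraceVA {V A B : Type*} [Fintype V] [Fintype A]
    (M : Matrix (V × A × B) (V × A × B) ℂ) : Matrix B B ℂ :=
  Matrix.of fun b b' => ∑ v, ∑ a, M (v, a, b) (v, a, b')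

noncomputable def ptraceV₁A {V V₁ A B : Type*} [Fintype V₁] [Fintype A]
    (M : Matrix (V × V₁ × A × B) (V × V₁ × A × B) ℂ) : Matrix (V × B) (V × B) ℂ :=
  Matrix.of fun p q => ∑ v₁, ∑ a, M (p.1, v₁, a, p.2) (q.1, v₁, a, q.2)

def ptranspose₁ {V B : Type*} (M : Matrix (V × B) (V × B) ℂ) : Matrix (V × B) (V × B) ℂ :=
  Matrix.of fun p q => M (q.1, p.2) (p.1, q.2)

def ptranspose₂ {V B : Type*} (M : Matrix (V × B) (V × B) ℂ) : Matrix (V × B) (V × B) ℂ :=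
  Matrix.of fun p q => M (p.1, q.2) (q.1, p.2)

def Separable {V B : Type*} [Fintype V] [Fintype B]
    (M : Matrix (V × B) (V × B) ℂ) : Prop :=
  ∃ (n : ℕ) (τ : Fin n → Matrix V V ℂ) (χ : Fin n → Matrix B B ℂ),
    (∀ i, (τ i).PosSemidef) ∧ (∀ i, (χ i).PosSemidef) ∧ M = ∑ i, τ i ⊗ₖ χ i

def IsState {V : Type*} [Fintype V] (ρ : Matrix V V ℂ) : Prop :=
  ρ.PosSemidef ∧ ρ.trace = 1

noncomputable def maxEnt (d : ℕ) : Matrix (Fin d × Fin d) (Fin d × Fin d) ℂ :=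
  Matrix.of fun p q => if p.1 = p.2 ∧ q.1 = q.2 then (d : ℂ)⁻¹ else 0

noncomputable def chanOp {V A B : Type*} [Fintype V] [Fintype A] [Fintype B]
    [DecidableEq V] [DecidableEq B]
    (M : Matrix (V × A) (V × A) ℂ) (ρ : Matrix (A × B) (A × B) ℂ) :
    Matrix (V × B) (V × B) ℂ :=
  ptraceMid ((Matrix.reindex (Equiv.prodAssoc V A B) (Equiv.prodAssoc V A B)
      (M ⊗ₖ (1 : Matrix B B ℂ))) * ((1 : Matrix V V ℂ) ⊗ₖ ρ))

noncomputable def teleA {V A B : Type*} [Fintype V] [Fintype A] [Fintype B] [DecidableEq B]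
    (M : Matrix (V × A) (V × A) ℂ) (ρ : Matrix (A × B) (A × B) ℂ) (ω : Matrix V V ℂ) :
    Matrix B B ℂ :=
  ptraceVA ((Matrix.reindex (Equiv.prodAssoc V A B) (Equiv.prodAssoc V A B)
      (M ⊗ₖ (1 : Matrix B B ℂ))) * (ω ⊗ₖ ρ))

noncomputable def margOp {V A : Type*} [Fintype V] [Fintype A] [DecidableEq V]
    (M : Matrix (V × A) (V × A) ℂ) (ρA : Matrix A A ℂ) : Matrix V V ℂ :=
  ptrace₂ (M * ((1 : Matrix V V ℂ) ⊗ₖ ρA))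

noncomputable def piOp {A B : Type*} [Fintype A] [Fintype B] [DecidableEq B]
    (χ : Matrix A A ℂ) (ρ : Matrix (A × B) (A × B) ℂ) : Matrix B B ℂ :=
  ptrace₁ ((χ ⊗ₖ (1 : Matrix B B ℂ)) * ρ)

def TomoComplete {V X : Type*} [Fintype V] (ω : X → Matrix V V ℂ) : Prop :=
  ∀ H : Matrix V V ℂ, H.IsHermitian → H ∈ Submodule.span ℝ (Set.range ω)

noncomputable def shiftX (d : ℕ) : Matrix (Fin d) (Fin d) ℂ :=
  Matrix.of fun i j => if (i : ℕ) = ((j : ℕ) + 1) % d then 1 else 0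

noncomputable def clockZ (d : ℕ) : Matrix (Fin d) (Fin d) ℂ :=
  Matrix.of fun i j =>
    if i = j then Complex.exp (2 * (Real.pi : ℂ) * Complex.I * ((i : ℕ) : ℂ) / (d : ℂ)) else 0

noncomputable def HW (d : ℕ) (a : Fin d × Fin d) : Matrix (Fin d) (Fin d) ℂ :=
  shiftX d ^ (a.1 : ℕ) * clockZ d ^ (a.2 : ℕ)

noncomputable def bellPOVM (d : ℕ) (a : Fin d × Fin d) :
    Matrix (Fin d × Fin d) (Fin d × Fin d) ℂ :=
  (HW d a ⊗ₖ (1 : Matrix (Fin d) (Fin d) ℂ)) * maxEnt d *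
    ((HW d a)ᴴ ⊗ₖ (1 : Matrix (Fin d) (Fin d) ℂ))

noncomputable def negativity {A B : Type*} [Fintype A] [Fintype B]
    (ρ : Matrix (A × B) (A × B) ℂ) : ℝ :=
  sInf {t : ℝ | ∃ ρp ρm : Matrix (A × B) (A × B) ℂ,
    ρ = ρp - ρm ∧ (ptranspose₁ ρp).PosSemidef ∧ (ptranspose₁ ρm).PosSemidef ∧
    t = (ρm.trace).re}

noncomputable def epsGen {A B : Type*} [Fintype A] [Fintype B]
    (ρ : Matrix (A × B) (A × B) ℂ) : ℝ :=
  sInf {r : ℝ | 0 ≤ r ∧ ∃ ρs : Matrix (A × B) (A × B) ℂ, IsState ρs ∧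
    Separable ((((1 + r : ℝ) : ℂ))⁻¹ • (ρ + ((r : ℝ) : ℂ) • ρs))}

noncomputable def epsSep {A B : Type*} [Fintype A] [Fintype B]
    (ρ : Matrix (A × B) (A × B) ℂ) : ℝ :=
  sInf {r : ℝ | 0 ≤ r ∧ ∃ ρs : Matrix (A × B) (A × B) ℂ, IsState ρs ∧ Separable ρs ∧
    Separable ((((1 + r : ℝ) : ℂ))⁻¹ • (ρ + ((r : ℝ) : ℂ) • ρs))}

noncomputable def epsR {A B : Type*} [Fintype A] [Fintype B] [DecidableEq A] [DecidableEq B]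
    (ρ : Matrix (A × B) (A × B) ℂ) : ℝ :=
  sInf {r : ℝ | 0 ≤ r ∧
    Separable ((((1 + r : ℝ) : ℂ))⁻¹ •
      (ρ + ((r : ℝ) : ℂ) • ((Fintype.card (A × B) : ℂ)⁻¹ • (1 : Matrix (A × B) (A × B) ℂ))))}

noncomputable def epsBSA {A B : Type*} [Fintype A] [Fintype B]
    (ρ : Matrix (A × B) (A × B) ℂ) : ℝ :=
  sInf {p : ℝ | 0 ≤ p ∧ p ≤ 1 ∧ ∃ ρs σS : Matrix (A × B) (A × B) ℂ,
    IsState ρs ∧ IsState σS ∧ Separable σS ∧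
    ρ = ((p : ℝ) : ℂ) • ρs + (((1 - p : ℝ)) : ℂ) • σS}

noncomputable def tauGen {V B X ι : Type*} [Fintype V] [Fintype B] [Fintype ι]
    [DecidableEq V] [DecidableEq B]
    (ω : X → Matrix V V ℂ) (σ : ι → X → Matrix B B ℂ) : ℝ :=
  sInf {r : ℝ | 0 ≤ r ∧ ∃ (m : ℕ) (ρs : Matrix (Fin m × B) (Fin m × B) ℂ)
      (N : ι → Matrix (V × Fin m) (V × Fin m) ℂ) (Ms : ι → Matrix (V × B) (V × B) ℂ),
      IsState ρs ∧ (∀ a, (N a).PosSemidef) ∧ ((∑ a, N a) = 1) ∧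
      (∀ a, (Ms a).PosSemidef ∧ Separable (Ms a)) ∧
      (∀ a x, (((1 + r : ℝ) : ℂ))⁻¹ • (σ a x + ((r : ℝ) : ℂ) • teleA (N a) ρs (ω x)) =
        ptrace₁ (Ms a * (ω x ⊗ₖ (1 : Matrix B B ℂ)))) ∧
      (∀ x, (∑ a, Ms a) = (1 : Matrix V V ℂ) ⊗ₖ
        ((((1 + r : ℝ) : ℂ))⁻¹ •
          ((∑ a, σ a x) + ((r : ℝ) : ℂ) • ∑ a, teleA (N a) ρs (ω x))))}

noncomputable def tauCl {V B X ι : Type*} [Fintype V] [Fintype B] [Fintype ι]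
    [DecidableEq V] [DecidableEq B]
    (ω : X → Matrix V V ℂ) (σ : ι → X → Matrix B B ℂ) : ℝ :=
  sInf {r : ℝ | 0 ≤ r ∧ ∃ (Mb Ms : ι → Matrix (V × B) (V × B) ℂ),
    (∀ a, (Mb a).PosSemidef ∧ Separable (Mb a)) ∧
    (∀ a, (Ms a).PosSemidef ∧ Separable (Ms a)) ∧
    (∀ x, (∑ a, Mb a) = (1 : Matrix V V ℂ) ⊗ₖ
      (∑ a, ptrace₁ (Mb a * (ω x ⊗ₖ (1 : Matrix B B ℂ))))) ∧
    (∀ a x, (((1 + r : ℝ) : ℂ))⁻¹ •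
        (σ a x + ((r : ℝ) : ℂ) • ptrace₁ (Mb a * (ω x ⊗ₖ (1 : Matrix B B ℂ)))) =
      ptrace₁ (Ms a * (ω x ⊗ₖ (1 : Matrix B B ℂ)))) ∧
    (∀ x, (∑ a, Ms a) = (1 : Matrix V V ℂ) ⊗ₖ
      ((((1 + r : ℝ) : ℂ))⁻¹ •
        ((∑ a, σ a x) + ((r : ℝ) : ℂ) •
          ∑ a, ptrace₁ (Mb a * (ω x ⊗ₖ (1 : Matrix B B ℂ))))))}

noncomputable def tauR {V B X ι : Type*} [Fintype V] [Fintype B] [Fintype ι]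
    [DecidableEq V] [DecidableEq B]
    (ω : X → Matrix V V ℂ) (σ : ι → X → Matrix B B ℂ) : ℝ :=
  sInf {r : ℝ | 0 ≤ r ∧ ∃ (p : ι → ℝ) (Ms : ι → Matrix (V × B) (V × B) ℂ),
    (∀ a, 0 ≤ p a) ∧ ((∑ a, p a) = 1) ∧
    (∀ a, (Ms a).PosSemidef ∧ Separable (Ms a)) ∧
    (∀ a x, (((1 + r : ℝ) : ℂ))⁻¹ •
        (σ a x + ((r * p a : ℝ) : ℂ) • ((Fintype.card B : ℂ)⁻¹ • (1 : Matrix B B ℂ))) =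
      ptrace₁ (Ms a * (ω x ⊗ₖ (1 : Matrix B B ℂ)))) ∧
    (∀ x, (∑ a, Ms a) = (1 : Matrix V V ℂ) ⊗ₖ
      ((((1 + r : ℝ) : ℂ))⁻¹ •
        ((∑ a, σ a x) + ((r : ℝ) : ℂ) • ((Fintype.card B : ℂ)⁻¹ • (1 : Matrix B B ℂ)))))}

noncomputable def TW {V B X ι : Type*} [Fintype V] [Fintype B] [Fintype ι]
    [DecidableEq B]
    (ω : X → Matrix V V ℂ) (σ : ι → X → Matrix B B ℂ) : ℝ :=
  sInf {p : ℝ | 0 ≤ p ∧ p ≤ 1 ∧ ∃ (Mt Mb : ι → Matrix (V × B) (V × B) ℂ),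
    (∀ a, (Mb a).PosSemidef ∧ Separable (Mb a)) ∧
    (∀ a, (ptranspose₁ (Mt a)).PosSemidef) ∧
    (∀ x x', (∑ a, ptrace₁ (Mt a * (ω x ⊗ₖ (1 : Matrix B B ℂ)))) =
      ∑ a, ptrace₁ (Mt a * (ω x' ⊗ₖ (1 : Matrix B B ℂ)))) ∧
    (∀ a x, σ a x = ptrace₁
      ((((p : ℝ) : ℂ) • Mt a + (((1 - p : ℝ)) : ℂ) • Mb a) * (ω x ⊗ₖ (1 : Matrix B B ℂ))))}

section Helpers

variable {V B : Type*} [Fintype V] [Fintype B]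

lemma sep_kron {τ : Matrix V V ℂ} {χ : Matrix B B ℂ} (hτ : τ.PosSemidef) (hχ : χ.PosSemidef) :
    Separable (τ ⊗ₖ χ) :=
  ⟨1, fun _ => τ, fun _ => χ, fun _ => hτ, fun _ => hχ, by simp⟩

lemma sep_zero : Separable (0 : Matrix (V × B) (V × B) ℂ) :=
  ⟨0, fun _ => 0, fun _ => 0, fun i => i.elim0, fun i => i.elim0, by simp⟩

lemma sep_add {M N : Matrix (V × B) (V × B) ℂ} (hM : Separable M) (hN : Separable N) :
    Separable (M + N) := by
  obtain ⟨n, τ, χ, h1, h2, rfl⟩ := hM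
  obtain ⟨m, τ', χ', h1', h2', rfl⟩ := hN
  refine ⟨n + m, Fin.append τ τ', Fin.append χ χ', ?_, ?_, ?_⟩
  · intro i
    refine Fin.addCases (fun i => ?_) (fun i => ?_) i
    · simpa using h1 i
    · simpa using h1' i
  · intro i
    refine Fin.addCases (fun i => ?_) (fun i => ?_) i
    · simpa using h2 i
    · simpa using h2' i
  · rw [Fin.sum_univ_add]; simp

lemma sep_sum {ι : Type*} (s : Finset ι) (M : ι → Matrix (V × B) (V × B) ℂ)
    (h : ∀ i ∈ s, Separable (M i)) : Separable (∑ i ∈ s, M i) := by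
  classical
  induction s using Finset.induction_on with
  | empty => simpa using sep_zero
  | insert a s ha ih =>
    rw [Finset.sum_insert ha]
    exact sep_add (h a (by simp)) (ih fun i hi => h i (by simp [hi]))

lemma sep_smul {M : Matrix (V × B) (V × B) ℂ} (hM : Separable M) {c : ℝ} (hc : 0 ≤ c) :
    Separable ((c : ℂ) • M) := by
  obtain ⟨n, τ, χ, h1, h2, rfl⟩ := hM
  refine ⟨n, fun i => (c : ℂ) • τ i, χ, fun i => (h1 i).smul (by exact_mod_cast hc), h2, ?_⟩
  rw [Finset.smul_sum]
  simp [Matrix.smul_kronecker]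

lemma sep_psd {M : Matrix (V × B) (V × B) ℂ} (hM : Separable M) : M.PosSemidef := by
  obtain ⟨n, τ, χ, h1, h2, rfl⟩ := hM
  exact Matrix.posSemidef_sum _ fun i _ => (h1 i).kronecker (h2 i)

lemma sep_ptranspose {M : Matrix (V × B) (V × B) ℂ} (hM : Separable M) :
    Separable (ptranspose₁ M) := by
  obtain ⟨n, τ, χ, h1, h2, rfl⟩ := hM
  refine ⟨n, fun i => (τ i)ᵀ, χ, fun i => (h1 i).transpose, h2, ?_⟩
  ext p q
  simp [ptranspose₁, Matrix.sum_apply, Matrix.kroneckerMap_apply]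

variable [DecidableEq V] [DecidableEq B]

def selM (i : V) : Matrix B (V × B) ℂ := Matrix.of fun b p => if (i, b) = p then 1 else 0

def blk (ρ : Matrix (V × B) (V × B) ℂ) (i j : V) : Matrix B B ℂ :=
  Matrix.of fun b b' => ρ (i, b) (j, b')

lemma blk_eq (ρ : Matrix (V × B) (V × B) ℂ) (i j : V) :
    blk ρ i j = (selM i : Matrix B (V × B) ℂ) * ρ * (selM j : Matrix B (V × B) ℂ)ᴴ := by
  ext b b'
  simp only [blk, selM, Matrix.mul_apply, Matrix.of_apply, Matrix.conjTranspose_apply, ite_mul,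
    one_mul, zero_mul, Finset.sum_ite_eq, Finset.mem_univ, if_true, apply_ite star, star_one,
    star_zero, mul_ite, mul_one, mul_zero]

lemma blk_psd {ρ : Matrix (V × B) (V × B) ℂ} (hρ : ρ.PosSemidef) (i j : V) (z : ℂ)
    (hz : z * star z = 1) :
    ((blk ρ i i + blk ρ j j) + (star z • blk ρ i j + z • blk ρ j i)).PosSemidef := by
  have hz' : star z * z = 1 := by rw [mul_comm, hz]
  have h := hρ.mul_mul_conjTranspose_same (selM i + z • selM j : Matrix B (V × B) ℂ)
  convert h using 1
  simp only [blk_eq, Matrix.conjTranspose_add, Matrix.conjTranspose_smul, Matrix.add_mul,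
    Matrix.mul_add, Matrix.smul_mul, Matrix.mul_smul, smul_add, smul_smul, hz', one_smul]
  abel

lemma blk_psd_diag {ρ : Matrix (V × B) (V × B) ℂ} (hρ : ρ.PosSemidef) (i : V) :
    (blk ρ i i).PosSemidef := by
  rw [blk_eq]; exact hρ.mul_mul_conjTranspose_same _

abbrev EE (i j : V) : Matrix V V ℂ := Matrix.single i j 1

lemma EE_eq (i j : V) : EE i j = (Matrix.single i () 1 : Matrix V Unit ℂ) *
    (Matrix.single j () 1 : Matrix V Unit ℂ)ᴴ := by
  simp [EE]

lemma EE_psd (i j : V) (z : ℂ) (hz : z * star z = 1) :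
    ((EE i i + EE j j) + (star z • EE i j + z • EE j i)).PosSemidef := by
  have hz' : star z * z = 1 := by rw [mul_comm, hz]
  have h := Matrix.posSemidef_self_mul_conjTranspose
    ((Matrix.single i () 1 : Matrix V Unit ℂ) + z • (Matrix.single j () 1 : Matrix V Unit ℂ))
  convert h using 1
  simp only [EE_eq, Matrix.conjTranspose_add, Matrix.conjTranspose_smul, Matrix.add_mul,
    Matrix.mul_add, Matrix.smul_mul, Matrix.mul_smul, smul_add, smul_smul, hz', one_smul]
  abel

lemma EE_psd_diag (i : V) : (EE i i).PosSemidef := by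
  rw [EE_eq]; exact Matrix.posSemidef_self_mul_conjTranspose _

lemma pair_sep {ρ : Matrix (V × B) (V × B) ℂ} (hρ : ρ.PosSemidef) (i j : V) :
    Separable ((EE i i + EE j j) ⊗ₖ (blk ρ i i + blk ρ j j)
      - (EE i j ⊗ₖ blk ρ j i + EE j i ⊗ₖ blk ρ i j)) := by
  have key : ∀ z : ℂ, z * star z = 1 →
      Separable (((EE i i + EE j j) + (star z • EE i j + z • EE j i)) ⊗ₖ
        ((blk ρ i i + blk ρ j j) + (star (-z) • blk ρ i j + (-z) • blk ρ j i))) := by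
    intro z hz
    exact sep_kron (EE_psd i j z hz) (blk_psd hρ i j (-z) (by simpa using hz))
  have h := sep_smul (sep_add (sep_add (key 1 (by simp)) (key (-1) (by simp)))
    (sep_add (key Complex.I (by simp)) (key (-Complex.I) (by simp)))) (c := 1 / 4) (by norm_num)
  convert h using 1
  ext p q
  simp only [Matrix.sub_apply, Matrix.add_apply, Matrix.smul_apply, Matrix.kroneckerMap_apply,
    smul_eq_mul, star_neg, star_one, Complex.star_def, Complex.conj_I]
  have hI : Complex.I ^ 2 = -1 := Complex.I_sq
  push_cast
  linear_combination (1 / 2 : ℂ) * (EE i j p.1 q.1 - EE j i p.1 q.1) *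
    (blk ρ i j p.2 q.2 - blk ρ j i p.2 q.2) * hI

lemma main_sep {ρ : Matrix (V × B) (V × B) ℂ} (hρ : ρ.PosSemidef) :
    Separable ((Fintype.card V : ℂ) • ((1 : Matrix V V ℂ) ⊗ₖ ptrace₁ ρ) - ptranspose₁ ρ) := by
  have h : Separable (∑ i : V, ∑ j ∈ Finset.univ.erase i,
      ((((1 / 2 : ℝ) : ℂ)) • ((EE i i + EE j j) ⊗ₖ (blk ρ i i + blk ρ j j)
      - (EE i j ⊗ₖ blk ρ j i + EE j i ⊗ₖ blk ρ i j)) +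
      (((Fintype.card V : ℝ) - 1 : ℝ) : ℂ) • (EE i i ⊗ₖ blk ρ j j))) := by
    refine sep_sum _ _ fun i _ => sep_sum _ _ fun j _ => sep_add ?_ ?_
    · exact sep_smul (pair_sep hρ i j) (by norm_num)
    · refine sep_smul (sep_kron (EE_psd_diag i) (blk_psd_diag hρ j)) ?_
      have : 1 ≤ Fintype.card V := Fintype.card_pos_iff.mpr ⟨i⟩
      have : (1 : ℝ) ≤ Fintype.card V := by exact_mod_cast this
      linarith
  convert h using 1
  have e1 : (1 : Matrix V V ℂ) ⊗ₖ ptrace₁ ρ = ∑ i : V, ∑ j : V, EE i i ⊗ₖ blk ρ j j := by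
    ext p q
    simp only [Matrix.sum_apply, Matrix.kroneckerMap_apply, ptrace₁, blk, EE, Matrix.of_apply,
      Matrix.single_apply, Matrix.one_apply]
    simp only [← Finset.mul_sum, ← Finset.sum_mul]
    congr 1
    by_cases hpq : p.1 = q.1
    · simp [hpq]
    · rw [if_neg hpq, Finset.sum_eq_zero]
      intro i _
      rw [if_neg]
      rintro ⟨rfl, h2⟩
      exact hpq h2
  have e2 : ptranspose₁ ρ = ∑ i : V, ∑ j : V, EE i j ⊗ₖ blk ρ j i := by
    ext p q
    simp only [Matrix.sum_apply, Matrix.kroneckerMap_apply, ptranspose₁, blk, EE, Matrix.of_apply,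
      Matrix.single_apply, ite_and, ite_mul, one_mul, zero_mul]
    simp
  rw [e1, e2]
  simp_rw [Finset.sum_erase_eq_sub (Finset.mem_univ _)]
  simp only [Matrix.add_kronecker, Matrix.kronecker_add]
  simp only [Finset.sum_sub_distrib, Finset.sum_add_distrib, smul_add, smul_sub,
    ← Finset.smul_sum, Finset.sum_const, Finset.card_univ]
  rw [Finset.sum_comm (f := fun i j : V => EE j j ⊗ₖ blk ρ i i),
    Finset.sum_comm (f := fun i j : V => EE j i ⊗ₖ blk ρ i j)]
  simp only [← Finset.smul_sum, ← Nat.cast_smul_eq_nsmul ℂ]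
  push_cast
  module

lemma tomo_ext {X : Type*} {ω : X → Matrix V V ℂ} (h : TomoComplete ω)
    {M N : Matrix (V × B) (V × B) ℂ}
    (hMN : ∀ x, ptrace₁ (M * (ω x ⊗ₖ (1 : Matrix B B ℂ))) =
      ptrace₁ (N * (ω x ⊗ₖ (1 : Matrix B B ℂ)))) : M = N := by
  have formula : ∀ (D : Matrix (V × B) (V × B) ℂ) (H : Matrix V V ℂ) (b b' : B),
      ptrace₁ (D * (H ⊗ₖ (1 : Matrix B B ℂ))) b b' =
        ∑ v, ∑ v', D (v, b) (v', b') * H v' v := by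
    intro D H b b'
    simp [ptrace₁, Matrix.mul_apply, Fintype.sum_prod_type, Matrix.one_apply]
  have herm : ∀ H : Matrix V V ℂ, H.IsHermitian → ∀ b b',
      ∑ v, ∑ v', (M - N) (v, b) (v', b') * H v' v = 0 := by
    intro H hH b b'
    refine Submodule.span_induction (p := fun H _ =>
      ∑ v, ∑ v', (M - N) (v, b) (v', b') * H v' v = 0) ?_ ?_ ?_ ?_ (h H hH)
    · rintro _ ⟨x, rfl⟩
      have := congrFun (congrFun (hMN x) b) b'
      rw [formula, formula] at this
      simp only [Matrix.sub_apply, sub_mul, Finset.sum_sub_distrib, this, sub_self]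
    · simp
    · intro x y _ _ hx hy
      simp only [Matrix.add_apply, mul_add, Finset.sum_add_distrib, hx, hy, add_zero]
    · intro a x _ hx
      simp only [Matrix.smul_apply, mul_smul_comm, ← Finset.smul_sum, hx, smul_zero]
  ext ⟨v, b⟩ ⟨v', b'⟩
  have h1 := herm (EE v v' + EE v' v) (by
    simp [Matrix.IsHermitian, EE, add_comm]) b b'
  have h2 := herm (Complex.I • (EE v v' - EE v' v)) (by
    simp [Matrix.IsHermitian, EE, ← smul_neg]) b b'
  simp only [Matrix.add_apply, Matrix.sub_apply, Matrix.smul_apply, EE, Matrix.single_apply,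
    ite_and, smul_eq_mul, mul_add, mul_sub, mul_ite, mul_one, mul_zero, Finset.sum_add_distrib,
    Finset.sum_sub_distrib, Finset.sum_ite_eq, Finset.mem_univ, if_true, Finset.sum_ite_irrel,
    Finset.sum_const_zero] at h1 h2
  have hI := Complex.I_mul_I
  linear_combination (1 / 2 : ℂ) * h1 + (Complex.I / 2) * h2 +
    (1 / 2 : ℂ) * (M (v, b) (v', b') - N (v, b) (v', b') - M (v', b) (v, b') + N (v', b) (v, b')) * hI

end Helpers

section Tele

variable {B : Type*} [Fintype B] [DecidableEq B]

lemma tele0 (d : ℕ) (ρ : Matrix (Fin d × B) (Fin d × B) ℂ) (ω : Matrix (Fin d) (Fin d) ℂ) :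
    teleA (maxEnt d) ρ ω =
      ptrace₁ (((d : ℂ)⁻¹ • ptranspose₁ ρ) * (ω ⊗ₖ (1 : Matrix B B ℂ))) := by
  ext b b'
  simp [teleA, ptraceVA, ptrace₁, maxEnt, ptranspose₁, Matrix.mul_apply, Fintype.sum_prod_type,
    Matrix.one_apply, ite_and, Matrix.kroneckerMap_apply]
  refine Finset.sum_congr rfl fun x _ => Finset.sum_congr rfl fun y _ => ?_
  ring

lemma tele1 (d : ℕ) (ρ : Matrix (Fin d × B) (Fin d × B) ℂ) (ω : Matrix (Fin d) (Fin d) ℂ) :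
    teleA (1 : Matrix (Fin d × Fin d) (Fin d × Fin d) ℂ) ρ ω = ω.trace • ptrace₁ ρ := by
  ext b b'
  simp [teleA, ptraceVA, ptrace₁, Matrix.trace, Finset.sum_mul_sum]

lemma tele_sub (d : ℕ) (M N : Matrix (Fin d × Fin d) (Fin d × Fin d) ℂ)
    (ρ : Matrix (Fin d × B) (Fin d × B) ℂ) (ω : Matrix (Fin d) (Fin d) ℂ) :
    teleA (M - N) ρ ω = teleA M ρ ω - teleA N ρ ω := by
  ext b b'
  simp [teleA, ptraceVA, Matrix.mul_apply, sub_mul]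

lemma ptr_one {V : Type*} [Fintype V] [DecidableEq V] (Y : Matrix B B ℂ) (ω : Matrix V V ℂ) :
    ptrace₁ (((1 : Matrix V V ℂ) ⊗ₖ Y) * (ω ⊗ₖ (1 : Matrix B B ℂ))) = ω.trace • Y := by
  ext b b'
  rw [← Matrix.mul_kronecker_mul]
  simp [ptrace₁, Matrix.trace, Finset.sum_mul]

end Tele

lemma ptrace_smul {V B : Type*} [Fintype V] (c : ℂ) (M : Matrix (V × B) (V × B) ℂ) :
    ptrace₁ (c • M) = c • ptrace₁ M := by
  ext b b'; simp [ptrace₁, Finset.mul_sum]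

lemma ptrace_add {V B : Type*} [Fintype V] (M N : Matrix (V × B) (V × B) ℂ) :
    ptrace₁ (M + N) = ptrace₁ M + ptrace₁ N := by
  ext b b'; simp [ptrace₁, Finset.sum_add_distrib]

lemma ptrace_sub {V B : Type*} [Fintype V] (M N : Matrix (V × B) (V × B) ℂ) :
    ptrace₁ (M - N) = ptrace₁ M - ptrace₁ N := by
  ext b b'; simp [ptrace₁, Finset.sum_sub_distrib]

lemma ptranspose_add {V B : Type*} (M N : Matrix (V × B) (V × B) ℂ) :
    ptranspose₁ (M + N) = ptranspose₁ M + ptranspose₁ N := by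
  ext p q; simp [ptranspose₁]

lemma ptranspose_smul {V B : Type*} (c : ℂ) (M : Matrix (V × B) (V × B) ℂ) :
    ptranspose₁ (c • M) = c • ptranspose₁ M := by
  ext p q; simp [ptranspose₁]

lemma ptranspose_one {V B : Type*} [DecidableEq V] [DecidableEq B] :
    ptranspose₁ (1 : Matrix (V × B) (V × B) ℂ) = 1 := by
  ext ⟨v, b⟩ ⟨v', b'⟩
  simp [ptranspose₁, Matrix.one_apply, Prod.ext_iff, eq_comm]

lemma ptranspose_invol {V B : Type*} (M : Matrix (V × B) (V × B) ℂ) :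
    ptranspose₁ (ptranspose₁ M) = M := by
  ext p q; simp [ptranspose₁]

def tauSet {V B X ι : Type*} [Fintype V] [Fintype B] [Fintype ι]
    [DecidableEq V] [DecidableEq B]
    (ω : X → Matrix V V ℂ) (σ : ι → X → Matrix B B ℂ) : Set ℝ :=
  {r : ℝ | 0 ≤ r ∧ ∃ (p : ι → ℝ) (Ms : ι → Matrix (V × B) (V × B) ℂ),
    (∀ a, 0 ≤ p a) ∧ ((∑ a, p a) = 1) ∧
    (∀ a, (Ms a).PosSemidef ∧ Separable (Ms a)) ∧
    (∀ a x, (((1 + r : ℝ) : ℂ))⁻¹ •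
        (σ a x + ((r * p a : ℝ) : ℂ) • ((Fintype.card B : ℂ)⁻¹ • (1 : Matrix B B ℂ))) =
      ptrace₁ (Ms a * (ω x ⊗ₖ (1 : Matrix B B ℂ)))) ∧
    (∀ x, (∑ a, Ms a) = (1 : Matrix V V ℂ) ⊗ₖ
      ((((1 + r : ℝ) : ℂ))⁻¹ •
        ((∑ a, σ a x) + ((r : ℝ) : ℂ) • ((Fintype.card B : ℂ)⁻¹ • (1 : Matrix B B ℂ)))))}

def epsSet {A B : Type*} [Fintype A] [Fintype B] [DecidableEq A] [DecidableEq B]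
    (ρ : Matrix (A × B) (A × B) ℂ) : Set ℝ :=
  {r : ℝ | 0 ≤ r ∧
    Separable ((((1 + r : ℝ) : ℂ))⁻¹ •
      (ρ + ((r : ℝ) : ℂ) • ((Fintype.card (A × B) : ℂ)⁻¹ • (1 : Matrix (A × B) (A × B) ℂ))))}

lemma ptr_one_one {V B : Type*} [Fintype V] [Fintype B] [DecidableEq V] [DecidableEq B]
    (ω : Matrix V V ℂ) :
    ptrace₁ (ω ⊗ₖ (1 : Matrix B B ℂ)) = ω.trace • (1 : Matrix B B ℂ) := by
  have := ptr_one (1 : Matrix B B ℂ) ω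
  rwa [Matrix.one_kronecker_one, Matrix.one_mul] at this

section Final

variable {B X : Type*} [Fintype B] [DecidableEq B]

lemma tau_to_eps (d : ℕ) (hd : 1 ≤ d)
    (ρ : Matrix (Fin d × B) (Fin d × B) ℂ)
    (ω : X → Matrix (Fin d) (Fin d) ℂ) (hω : ∀ x, IsState (ω x))
    (htomo : TomoComplete ω)
    (P : Fin 2 → Matrix (Fin d × Fin d) (Fin d × Fin d) ℂ)
    (hP0 : P 0 = maxEnt d) {r : ℝ}
    (hr : r ∈ tauSet ω (fun (a : Fin 2) x => teleA (P a) ρ (ω x))) :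
    ∃ s ∈ epsSet ρ, s ≤ r * (d : ℝ) ^ 2 := by
  obtain ⟨hr0, p, Ms, hp, hp1, hMs, hσ, -⟩ := hr
  have hdR : (0 : ℝ) < d := by exact_mod_cast hd
  have hd0 : (d : ℂ) ≠ 0 := by exact_mod_cast hdR.ne'
  have hp0 : p 0 ≤ 1 := by
    have := hp 1
    rw [Fin.sum_univ_two] at hp1
    linarith
  have hrp : 0 ≤ r * p 0 := mul_nonneg hr0 (hp 0)
  have hr1 : (((1 + r : ℝ) : ℂ)) ≠ 0 := by
    have : (1 + r : ℝ) ≠ 0 := by positivity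
    exact_mod_cast this
  have hM0 : Ms 0 = (((1 + r : ℝ) : ℂ))⁻¹ • ((d : ℂ)⁻¹ • ptranspose₁ ρ +
      ((r * p 0 : ℝ) : ℂ) • ((Fintype.card B : ℂ)⁻¹ • (1 : Matrix (Fin d × B) (Fin d × B) ℂ))) := by
    refine tomo_ext htomo fun x => ?_
    rw [← hσ 0 x]
    simp only [hP0, tele0, Matrix.smul_mul, Matrix.add_mul, ptrace_smul, ptrace_add,
      Matrix.one_mul, ptr_one_one, (hω x).2, one_smul]
  refine ⟨r * p 0 * (d : ℝ) ^ 2, ⟨by positivity, ?_⟩, ?_⟩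
  · have hc : 0 ≤ (1 + r * p 0 * (d : ℝ) ^ 2)⁻¹ * ((1 + r) * d) := by positivity
    have h := sep_smul (sep_ptranspose (hMs 0).2) hc
    rw [hM0] at h
    convert h using 1
    simp only [ptranspose_smul, ptranspose_add, ptranspose_invol, ptranspose_one, smul_smul,
      smul_add, Fintype.card_prod, Fintype.card_fin]
    have hs : ((1 + r * p 0 * (d : ℝ) ^ 2 : ℝ) : ℂ) ≠ 0 := by
      have : (1 + r * p 0 * (d : ℝ) ^ 2 : ℝ) ≠ 0 := by positivity
      exact_mod_cast this
    push_cast at hs hr1 ⊢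
    congr 2
    · field_simp
    · rw [mul_inv]
      field_simp
  · have : r * p 0 ≤ r := mul_le_of_le_one_right hr0 hp0
    gcongr

lemma eps_to_tau (d : ℕ) (hd : 1 ≤ d)
    (ρ : Matrix (Fin d × B) (Fin d × B) ℂ) (hρ : IsState ρ)
    (ω : X → Matrix (Fin d) (Fin d) ℂ) (hω : ∀ x, IsState (ω x))
    (P : Fin 2 → Matrix (Fin d × Fin d) (Fin d × Fin d) ℂ)
    (hP0 : P 0 = maxEnt d) (hP1 : P 1 = 1 - maxEnt d) {r : ℝ}
    (hr : r ∈ epsSet ρ) :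
    r / (d : ℝ) ^ 2 ∈ tauSet ω (fun (a : Fin 2) x => teleA (P a) ρ (ω x)) := by
  obtain ⟨hr0, hsep⟩ := hr
  have hdR : (0 : ℝ) < d := by exact_mod_cast hd
  have hd0 : (d : ℂ) ≠ 0 := by exact_mod_cast hdR.ne'
  have hs0 : 0 ≤ r / (d : ℝ) ^ 2 := by positivity
  set s := r / (d : ℝ) ^ 2 with hs
  have hrs : r = s * (d : ℝ) ^ 2 := by rw [hs]; field_simp
  have hs1 : (((1 + s : ℝ) : ℂ)) ≠ 0 := by
    have : (1 + s : ℝ) ≠ 0 := by positivity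
    exact_mod_cast this
  have hr1 : (((1 + r : ℝ) : ℂ)) ≠ 0 := by
    have : (1 + r : ℝ) ≠ 0 := by positivity
    exact_mod_cast this
  have hsep0 : Separable ((((1 + s : ℝ) : ℂ))⁻¹ • ((d : ℂ)⁻¹ • ptranspose₁ ρ +
      (s : ℂ) • ((Fintype.card B : ℂ)⁻¹ • (1 : Matrix (Fin d × B) (Fin d × B) ℂ)))) := by
    have hc : 0 ≤ (1 + s)⁻¹ * (d : ℝ)⁻¹ * (1 + r) := by positivity
    have h := sep_smul (sep_ptranspose hsep) hc
    convert h using 1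
    simp only [ptranspose_smul, ptranspose_add, ptranspose_one, smul_smul,
      smul_add, Fintype.card_prod, Fintype.card_fin]
    have hrc : (r : ℂ) = s * (d : ℂ) ^ 2 := by rw [hrs]; push_cast; ring
    push_cast at hs1 hr1 ⊢
    congr 2
    · field_simp
    · rw [mul_inv]
      field_simp
      rw [hrc]
  have hsep1 : Separable ((((1 + s : ℝ) : ℂ))⁻¹ • ((1 : Matrix (Fin d) (Fin d) ℂ) ⊗ₖ ptrace₁ ρ -
      (d : ℂ)⁻¹ • ptranspose₁ ρ)) := by
    have hc : 0 ≤ (1 + s)⁻¹ * (d : ℝ)⁻¹ := by positivity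
    have h := sep_smul (main_sep hρ.1) hc
    convert h using 1
    simp only [smul_smul, smul_sub, Fintype.card_fin]
    push_cast
    congr 2
    field_simp
  refine ⟨hs0, ![1, 0],
    ![(((1 + s : ℝ) : ℂ))⁻¹ • ((d : ℂ)⁻¹ • ptranspose₁ ρ +
      (s : ℂ) • ((Fintype.card B : ℂ)⁻¹ • (1 : Matrix (Fin d × B) (Fin d × B) ℂ))),
      (((1 + s : ℝ) : ℂ))⁻¹ • ((1 : Matrix (Fin d) (Fin d) ℂ) ⊗ₖ ptrace₁ ρ -
      (d : ℂ)⁻¹ • ptranspose₁ ρ)], ?_, ?_, ?_, ?_, ?_⟩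
  rotate_left 2
  · intro a
    fin_cases a
    · exact ⟨sep_psd hsep0, hsep0⟩
    · exact ⟨sep_psd hsep1, hsep1⟩
  · intro a x
    fin_cases a
    · simp [-Complex.coe_smul, hP0, tele0, Matrix.smul_mul, Matrix.add_mul, ptrace_smul, ptrace_add,
        ptr_one_one, (hω x).2]
    · simp [hP1, tele0, tele1, tele_sub, Matrix.smul_mul, Matrix.sub_mul, ptrace_smul, ptrace_sub,
        ptr_one, (hω x).2]
  · intro x
    simp only [Fin.sum_univ_two, hP0, hP1, tele_sub, tele1, (hω x).2, one_smul,
      add_sub_cancel, Matrix.cons_val_zero, Matrix.cons_val_one]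
    rw [← smul_add, Matrix.kronecker_smul, Matrix.kronecker_add, Matrix.kronecker_smul,
      Matrix.kronecker_smul, Matrix.one_kronecker_one]
    congr 1
    abel
  · intro a; fin_cases a <;> simp
  · simp

end Final

/-- for the partial Bell state measurement {Φ+, 1 − Φ+} and tomographically
complete inputs, τ_r({σ_{a|ω_x}}) = ε_r(ρ^{AB})/d². -/
theorem tauR_partial_bell {B X : Type*} [Fintype B] [DecidableEq B]
    (d : ℕ) (hd : 1 ≤ d)
    (ρ : Matrix (Fin d × B) (Fin d × B) ℂ) (hρ : IsState ρ)
    (ω : X → Matrix (Fin d) (Fin d) ℂ) (hω : ∀ x, IsState (ω x))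
    (htomo : TomoComplete ω)
    (P : Fin 2 → Matrix (Fin d × Fin d) (Fin d × Fin d) ℂ)
    (hP0 : P 0 = maxEnt d) (hP1 : P 1 = 1 - maxEnt d) :
    tauR ω (fun (a : Fin 2) x => teleA (P a) ρ (ω x)) = epsR ρ / (d : ℝ) ^ 2 := by
  have hdR : (0 : ℝ) < d := by exact_mod_cast hd
  change sInf (tauSet ω (fun (a : Fin 2) x => teleA (P a) ρ (ω x))) = sInf (epsSet ρ) / (d : ℝ) ^ 2
  have h1 := fun r => tau_to_eps d hd ρ ω hω htomo P hP0 (r := r)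
  have h2 := fun r => eps_to_tau d hd ρ hρ ω hω P hP0 hP1 (r := r)
  rcases (epsSet ρ).eq_empty_or_nonempty with he | hne
  · have ht : tauSet ω (fun (a : Fin 2) x => teleA (P a) ρ (ω x)) = ∅ := by
      rw [Set.eq_empty_iff_forall_notMem]
      intro r hr
      obtain ⟨s, hs, -⟩ := h1 r hr
      rw [he] at hs
      exact hs
    rw [he, ht]
    simp
  · have hbε : BddBelow (epsSet ρ) := ⟨0, fun r hr => hr.1⟩
    have hbτ : BddBelow (tauSet ω (fun (a : Fin 2) x => teleA (P a) ρ (ω x))) :=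
      ⟨0, fun r hr => hr.1⟩
    apply le_antisymm
    · rw [le_div_iff₀ (by positivity)]
      refine le_csInf hne fun r hr => ?_
      rw [← le_div_iff₀ (by positivity)]
      exact csInf_le hbτ (h2 r hr)
    · obtain ⟨r0, hr0⟩ := hne
      refine le_csInf ⟨_, h2 r0 hr0⟩ fun r hr => ?_
      obtain ⟨s, hs, hle⟩ := h1 r hr
      rw [div_le_iff₀ (by positivity)]
      exact (csInf_le hbε hs).trans hle

end Tele
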